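/- arXiv:1112.0684 — 2 statements merged into one kernel-verified Lean document; each statement's English description precedes it below -/
import Mathlib

section
/- Define W₁(r) = (2-r²)/(r(1-r²)) for r ∈ (0,1). Then W₁ attains its minimum over (0,1) at r₁ = √((5-√17)/2), and the minimum value equals m = √2(7+√17)/(4√(5-√17)); that is, W₁(r) ≥ m for all r ∈ (0,1) with equality at r = r₁. -/
/-!
Write `a = r₁`. Then `a² = (5 - √17) / 2` is the root in `(0, 1)` of `t² - 5 t + 2`, and eliminating
`√17 = 5 - 2 a²` gives `m = (6 - a²) / (2 a)`. Modulo `a⁴ = 5 a² - 2`, the point `a` is a double root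
of the cubic comparing `W₁` with `m`:
`2 a (2 - r²) - (6 - a²) r (1 - r²) = (r - a)² ((6 - a²) r + 2 a (5 - a²))`,
whose right-hand side is nonnegative for `r > 0` and vanishes at `r = a`.
-/

/-- the function `W₁(r) = (2-r²)/(r(1-r²))` on `(0,1)` attains its minimum
at `r₁ = √((5-√17)/2)`, with minimum value `m = √2(7+√17)/(4√(5-√17))`. -/
theorem stmt_15 (W₁ : ℝ → ℝ) (hW₁ : W₁ = fun r => (2 - r ^ 2) / (r * (1 - r ^ 2)))
    (r₁ : ℝ) (hr₁ : r₁ = Real.sqrt ((5 - Real.sqrt 17) / 2))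
    (m : ℝ) (hm : m = Real.sqrt 2 * (7 + Real.sqrt 17) / (4 * Real.sqrt (5 - Real.sqrt 17))) :
    r₁ ∈ Set.Ioo (0 : ℝ) 1 ∧ (∀ r ∈ Set.Ioo (0 : ℝ) 1, m ≤ W₁ r) ∧ W₁ r₁ = m := by
  have hs : Real.sqrt 17 ^ 2 = 17 := Real.sq_sqrt (by norm_num)
  have hs4 : 4 < Real.sqrt 17 := Real.lt_sqrt_of_sq_lt (by norm_num)
  have hs5 : Real.sqrt 17 < 5 := (Real.sqrt_lt' (by norm_num)).2 (by norm_num)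
  have ha : 0 < r₁ := hr₁ ▸ Real.sqrt_pos.2 (by linarith)
  have ha2 : r₁ ^ 2 = (5 - Real.sqrt 17) / 2 := by
    rw [hr₁]; exact Real.sq_sqrt (by linarith)
  have ha1 : r₁ < 1 := by nlinarith
  have hq : r₁ ^ 4 = 5 * r₁ ^ 2 - 2 := by
    have : r₁ ^ 4 = (r₁ ^ 2) ^ 2 := by ring
    rw [this, ha2]; linarith
  have hsa : Real.sqrt 17 = 5 - 2 * r₁ ^ 2 := by linarith
  have hroot : Real.sqrt (5 - Real.sqrt 17) = Real.sqrt 2 * r₁ := by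
    rw [hr₁, ← Real.sqrt_mul (by norm_num)]
    congr 1
    ring
  have hm' : m = (6 - r₁ ^ 2) / (2 * r₁) := by
    have h2 : Real.sqrt 2 ≠ 0 := by positivity
    rw [hm, hroot, hsa]
    field_simp
    ring
  have key : ∀ r : ℝ, (2 - r ^ 2) * (2 * r₁) - (6 - r₁ ^ 2) * (r * (1 - r ^ 2))
      = (r - r₁) ^ 2 * ((6 - r₁ ^ 2) * r + 2 * r₁ * (5 - r₁ ^ 2)) := by
    intro r
    linear_combination (2 * r₁ - 3 * r) * hq
  have hden : ∀ r ∈ Set.Ioo (0 : ℝ) 1, 0 < r * (1 - r ^ 2) := by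
    rintro r ⟨h0, h1⟩
    exact mul_pos h0 (by nlinarith)
  refine ⟨⟨ha, ha1⟩, ?_, ?_⟩
  · intro r hr
    have h0 : 0 < r := hr.1
    have h5 : 0 < 5 - r₁ ^ 2 := by linarith
    have h6 : 0 < 6 - r₁ ^ 2 := by linarith
    simp only [hW₁]
    rw [hm', div_le_div_iff₀ (by positivity) (hden r hr), ← sub_nonneg, key r]
    positivity
  · simp only [hW₁]
    rw [hm', div_eq_div_iff (hden r₁ ⟨ha, ha1⟩).ne' (by positivity), ← sub_eq_zero, key r₁]
    ring
end

section
/- Let f be a holomorphic map from the open unit ball B^n ⊂ ℂ^n into ℂ^n with |f(z)| ≤ M for all z ∈ B^n, where M > 0. Then for all z ∈ B^n the operator norm satisfies |f'(z)-f'(0)| ≤ M(2-|z|²)/(1-|z|²); moreover, for all z with |z| ≤ r₁ = √((5-√17)/2), one has |f'(z)-f'(0)| ≤ mM|z|, where m = √2(7+√17)/(4√(5-√17)). -/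
/-!
The first estimate follows from the Schwarz-Pick type bound `‖f'(z)‖ ≤ M / (1 - ‖z‖²)`
(`norm_fderiv_le_schwarzPick`), applied at `z` and at `0`. To get that bound in the direction of a
unit vector `v`, compose `f` with the disc `ζ ↦ z + ζ s / (1 + ⟪z, v⟫ ζ) • v`, `s = 1 - ‖z‖²`. It
maps the unit disc into the unit ball and has derivative `s • v` at `0`, so Cauchy's estimate for
the composition reads `s ‖f'(z) v‖ ≤ M`.

The second estimate is the Schwarz lemma on the ball of radius `r₁` for `f' - f'(0)`, which is
bounded there by `M + M / (1 - r₁²)`; the constant `m` is `(1 + 1 / (1 - r₁²)) / r₁`.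
To avoid showing that `f'` is holomorphic, the Schwarz lemma is applied to the increments
`w ↦ f (w + t • v) - f w`, which are controlled by the mean value inequality and the first bound,
and then `t → 0⁺` (`norm_fderiv_sub_le_schwarz`).
-/

open Metric

open Filter Topology Set

section Aux

variable {E F : Type*} [NormedAddCommGroup E] [InnerProductSpace ℂ E]
  [NormedAddCommGroup F] [NormedSpace ℂ F]

/-- Cauchy's estimate at the centre of the open unit disc. -/
lemma norm_deriv_zero_le_of_unitDisc {h : ℂ → F} {M : ℝ}
    (hd : DifferentiableOn ℂ h (ball 0 1)) (hb : ∀ ζ ∈ ball (0 : ℂ) 1, ‖h ζ‖ ≤ M) :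
    ‖deriv h 0‖ ≤ M := by
  have key : ∀ R : ℝ, 0 < R → R < 1 → ‖deriv h 0‖ * R ≤ M := by
    intro R hR hR1
    have hcb : closedBall (0 : ℂ) R ⊆ ball 0 1 := closedBall_subset_ball hR1
    have := Complex.norm_deriv_le_of_forall_mem_sphere_norm_le (f := h) (c := 0) (C := M) hR
      ((hd.mono hcb).diffContOnCl_ball subset_rfl)
      (fun ζ hζ => hb ζ (hcb (sphere_subset_closedBall hζ)))
    rwa [le_div_iff₀ hR] at this
  have hlim : Tendsto (fun R : ℝ => ‖deriv h 0‖ * R) (𝓝[<] 1) (𝓝 (‖deriv h 0‖ * 1)) :=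
    (continuous_const.mul continuous_id).continuousWithinAt
  rw [mul_one] at hlim
  refine le_of_tendsto hlim ?_
  filter_upwards [Ioo_mem_nhdsLT (zero_lt_one' ℝ)] with R hR using key R hR.1 hR.2

/-- The parametrized disc through `z` in the direction `v` stays in the unit ball. -/
lemma norm_disc_lt_one {z v : E} (hz : ‖z‖ < 1) (hv : ‖v‖ = 1) {ζ : ℂ} (hζ : ‖ζ‖ < 1) :
    1 + inner ℂ z v * ζ ≠ 0 ∧
    ‖z + (ζ * ((1 - ‖z‖ ^ 2 : ℝ) : ℂ) / (1 + inner ℂ z v * ζ)) • v‖ < 1 := by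
  set a : ℂ := inner ℂ z v with ha
  set s : ℝ := 1 - ‖z‖ ^ 2 with hs
  have hspos : 0 < s := by nlinarith [norm_nonneg z]
  have haz : ‖a‖ ≤ ‖z‖ := by simpa [hv] using norm_inner_le_norm (𝕜 := ℂ) z v
  set w : ℂ := a * ζ with hw
  have hwn : ‖w‖ = ‖a‖ * ‖ζ‖ := norm_mul _ _
  have hw1 : ‖w‖ < 1 := by nlinarith [norm_nonneg a, norm_nonneg ζ]
  have hne : 1 + w ≠ 0 := by
    intro h0
    have : w = -1 := by linear_combination h0
    simp [this] at hw1
  refine ⟨hne, ?_⟩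
  have hN : 0 < Complex.normSq (1 + w) := Complex.normSq_pos.2 hne
  have hsq : ‖z + (ζ * (s : ℂ) / (1 + w)) • v‖ ^ 2 =
      ‖z‖ ^ 2 + 2 * (s * (w.re + Complex.normSq w) / Complex.normSq (1 + w))
        + ‖ζ‖ ^ 2 * s ^ 2 / Complex.normSq (1 + w) := by
    rw [@norm_add_sq ℂ, inner_smul_right, ← ha, norm_smul, hv, norm_div, norm_mul, mul_one,
      div_pow, mul_pow, Complex.sq_norm (1 + w), Complex.norm_real, Real.norm_eq_abs, sq_abs]
    congr 3
    have : ζ * (s : ℂ) / (1 + w) * a = (s : ℂ) * (w / (1 + w)) := by rw [hw]; ring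
    rw [this, RCLike.re_eq_complex_re, Complex.re_ofReal_mul, Complex.div_re, ← add_div,
      ← mul_div_assoc]
    congr 2
    simp [Complex.normSq_apply]
    ring
  have hN' : Complex.normSq (1 + w) = 1 + 2 * w.re + Complex.normSq w := by
    simp [Complex.normSq_apply]; ring
  have hwsq : Complex.normSq w = ‖a‖ ^ 2 * ‖ζ‖ ^ 2 := by rw [← Complex.sq_norm, hwn, mul_pow]
  have hlt : ‖a‖ ^ 2 * ‖ζ‖ ^ 2 + s * ‖ζ‖ ^ 2 < 1 := by
    have h1 : ‖a‖ ^ 2 ≤ ‖z‖ ^ 2 := by gcongr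
    have h2 : ‖ζ‖ ^ 2 < 1 := by nlinarith [norm_nonneg ζ]
    nlinarith [sq_nonneg ‖ζ‖]
  have hfin : ‖z + (ζ * (s : ℂ) / (1 + w)) • v‖ ^ 2 < 1 := by
    rw [hsq, add_assoc, ← mul_div_assoc, ← add_div]
    have : (2 * (s * (w.re + Complex.normSq w)) + ‖ζ‖ ^ 2 * s ^ 2) / Complex.normSq (1 + w) < s := by
      rw [div_lt_iff₀ hN, hN', hwsq]
      nlinarith
    linarith
  nlinarith [norm_nonneg (z + (ζ * (s : ℂ) / (1 + w)) • v)]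

/-- Schwarz-Pick bound for the derivative of a bounded holomorphic map on the unit ball. -/
lemma norm_fderiv_le_schwarzPick {f : E → F} {M : ℝ} (hM : 0 ≤ M)
    (hf : DifferentiableOn ℂ f (ball 0 1)) (hbd : ∀ z ∈ ball (0 : E) 1, ‖f z‖ ≤ M)
    {z : E} (hz : ‖z‖ < 1) : ‖fderiv ℂ f z‖ ≤ M / (1 - ‖z‖ ^ 2) := by
  set s : ℝ := 1 - ‖z‖ ^ 2 with hs
  have hspos : 0 < s := by nlinarith [norm_nonneg z]
  have unit : ∀ v : E, ‖v‖ = 1 → ‖fderiv ℂ f z v‖ ≤ M / s := by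
    intro v hv
    set γ : ℂ → E := fun ζ => z + (ζ * (s : ℂ) / (1 + inner ℂ z v * ζ)) • v with hγ
    have hmem : ∀ ζ ∈ ball (0 : ℂ) 1, γ ζ ∈ ball (0 : E) 1 := fun ζ hζ =>
      mem_ball_zero_iff.2 (norm_disc_lt_one hz hv (mem_ball_zero_iff.1 hζ)).2
    have hγd : DifferentiableOn ℂ γ (ball 0 1) := by
      intro ζ hζ
      have hne := (norm_disc_lt_one hz hv (mem_ball_zero_iff.1 hζ)).1
      exact DifferentiableAt.differentiableWithinAt (by fun_prop (disch := exact hne))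
    have hγ0 : γ 0 = z := by simp [hγ]
    have hγ' : HasDerivAt γ ((s : ℂ) • v) 0 := by
      have h1 : HasDerivAt (fun ζ : ℂ => ζ * (s : ℂ)) (s : ℂ) 0 := by
        simpa using (hasDerivAt_id (0 : ℂ)).mul_const (s : ℂ)
      have h2 : HasDerivAt (fun ζ : ℂ => 1 + inner ℂ z v * ζ) (inner ℂ z v) 0 := by
        simpa using ((hasDerivAt_id (0 : ℂ)).const_mul (inner ℂ z v)).const_add 1
      have h3 := ((h1.fun_div h2 (by simp)).smul_const v).const_add z
      convert h3 using 1
      simp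
    have hfz : HasFDerivAt f (fderiv ℂ f z) (γ 0) := by
      rw [hγ0]
      exact (hf.differentiableAt (isOpen_ball.mem_nhds (mem_ball_zero_iff.2 hz))).hasFDerivAt
    have hcomp := hfz.comp_hasDerivAt (0 : ℂ) hγ'
    have := norm_deriv_zero_le_of_unitDisc (hf.comp hγd hmem) (fun ζ hζ => hbd _ (hmem ζ hζ))
    rw [hcomp.deriv, map_smul, norm_smul, Complex.norm_real, Real.norm_of_nonneg hspos.le] at this
    rw [le_div_iff₀ hspos]
    linarith
  refine ContinuousLinearMap.opNorm_le_bound _ (by positivity) fun v => ?_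
  rcases eq_or_ne v 0 with rfl | hv
  · simp
  have hv' : (0 : ℝ) < ‖v‖ := norm_pos_iff.2 hv
  have := unit (((‖v‖⁻¹ : ℝ) : ℂ) • v) (by
    rw [norm_smul, Complex.norm_real, norm_inv, norm_norm, inv_mul_cancel₀ hv'.ne'])
  rw [map_smul, norm_smul, Complex.norm_real, norm_inv, norm_norm, inv_mul_le_iff₀ hv'] at this
  linarith

/-- Schwarz lemma for `f' - f'(0)` on the ball of radius `r`. -/
lemma norm_fderiv_sub_le_schwarz {f : E → F} {M r : ℝ} (hM : 0 ≤ M) (hr : 0 < r) (hr1 : r < 1)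
    (hf : DifferentiableOn ℂ f (ball 0 1)) (hbd : ∀ z ∈ ball (0 : E) 1, ‖f z‖ ≤ M)
    {z : E} (hz : ‖z‖ < r) :
    ‖fderiv ℂ f z - fderiv ℂ f 0‖ ≤ (M / (1 - r ^ 2) + M) / r * ‖z‖ := by
  have hA : 0 < 1 - r ^ 2 := by nlinarith
  refine ContinuousLinearMap.opNorm_le_bound _ (by positivity) fun v => ?_
  let _ : NormedSpace ℝ E := NormedSpace.restrictScalars ℝ ℂ E
  let _ : NormedSpace ℝ F := NormedSpace.restrictScalars ℝ ℂ F
  have hsm : ∀ (t : ℝ) (x : E), t • x = (t : ℂ) • x := fun _ _ => rfl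
  have hlip : ∀ ρ : ℝ, ρ < 1 → ∀ x ∈ ball (0 : E) ρ, ∀ y ∈ ball (0 : E) ρ,
      ‖f y - f x‖ ≤ M / (1 - ρ ^ 2) * ‖y - x‖ := by
    intro ρ hρ x hx y hy
    refine (convex_ball (0 : E) ρ).norm_image_sub_le_of_norm_fderiv_le (𝕜 := ℂ)
      (fun p hp => hf.differentiableAt (isOpen_ball.mem_nhds (ball_subset_ball hρ.le hp)))
      (fun p hp => ?_) hx hy
    have hpρ := mem_ball_zero_iff.1 hp
    refine (norm_fderiv_le_schwarzPick hM hf hbd (hpρ.trans hρ)).trans ?_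
    have h0 := norm_nonneg p
    have : 0 < 1 - ρ ^ 2 := by nlinarith
    gcongr
  -- `t * (‖v‖ + 1)` exceeds `‖t • v‖` strictly, even for `v = 0`, so a translation by `t • v` maps
  -- the open ball of radius `ρ` into the open ball of radius `ρ + t * (‖v‖ + 1)`.
  have key : ∀ t : ℝ, 0 < t → r + t * (‖v‖ + 1) < 1 →
      ‖t⁻¹ • (f (z + t • v) - f z) - t⁻¹ • (f (0 + t • v) - f 0)‖ ≤
        (M / (1 - (r + t * (‖v‖ + 1)) ^ 2) + M / (1 - (t * (‖v‖ + 1)) ^ 2)) * ‖v‖ / r * ‖z‖ := by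
    intro t ht ht1
    have htv : ‖t • v‖ = t * ‖v‖ := by
      rw [hsm, norm_smul, Complex.norm_real, Real.norm_of_nonneg ht.le]
    set τ : ℝ := t * (‖v‖ + 1) with hτ
    have hτv : t * ‖v‖ < τ := by rw [hτ]; linarith
    have htv0 : 0 ≤ t * ‖v‖ := by positivity
    have hin : ∀ ρ : ℝ, ∀ w ∈ ball (0 : E) ρ, w ∈ ball (0 : E) (ρ + τ) ∧
        w + t • v ∈ ball (0 : E) (ρ + τ) := by
      intro ρ w hw
      rw [mem_ball_zero_iff] at hw
      simp only [mem_ball_zero_iff]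
      have := norm_add_le w (t • v)
      constructor <;> linarith
    have hincr : ∀ w ∈ ball (0 : E) r,
        ‖f (w + t • v) - f w‖ ≤ M / (1 - (r + τ) ^ 2) * (t * ‖v‖) := by
      intro w hw
      have := hlip (r + τ) ht1 w (hin r w hw).1 _ (hin r w hw).2
      rwa [add_sub_cancel_left, htv] at this
    have hincr0 : ‖f (0 + t • v) - f 0‖ ≤ M / (1 - τ ^ 2) * (t * ‖v‖) := by
      have := hlip τ (by linarith) 0 (mem_ball_self (by linarith)) (0 + t • v)
        (by rw [zero_add, mem_ball_zero_iff]; linarith)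
      rwa [add_sub_cancel_left, htv] at this
    have hd : DifferentiableOn ℂ (fun w => f (w + t • v) - f w) (ball 0 r) := by
      refine DifferentiableOn.sub (hf.comp (by fun_prop) fun w hw => ?_)
        (hf.mono (ball_subset_ball hr1.le))
      exact ball_subset_ball ht1.le (hin r w hw).2
    have hmaps : MapsTo (fun w => f (w + t • v) - f w) (ball 0 r)
        (closedBall (f (0 + t • v) - f 0)
          ((M / (1 - (r + τ) ^ 2) + M / (1 - τ ^ 2)) * (t * ‖v‖))) := by
      intro w hw
      rw [mem_closedBall, dist_eq_norm, add_mul]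
      exact (norm_sub_le _ _).trans (add_le_add (hincr w hw) hincr0)
    have := Complex.dist_le_div_mul_dist_of_mapsTo_ball hd hmaps (mem_ball_zero_iff.2 hz)
    rw [dist_eq_norm, dist_zero_right] at this
    have hti : ∀ x : F, ‖t⁻¹ • x‖ = t⁻¹ * ‖x‖ := fun x => by
      rw [norm_smul, Real.norm_of_nonneg (by positivity)]
    rw [← smul_sub, hti, inv_mul_le_iff₀ ht]
    refine this.trans_eq ?_
    ring
  have hder : ∀ p : E, ‖p‖ < 1 →
      Tendsto (fun t : ℝ => t⁻¹ • (f (p + t • v) - f p)) (𝓝[>] 0) (𝓝 (fderiv ℂ f p v)) := by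
    intro p hp
    have h := (hf.differentiableAt (isOpen_ball.mem_nhds (mem_ball_zero_iff.2 hp))).hasFDerivAt
    have h2 := (h.restrictScalars ℝ).hasLineDerivAt v
    have h3 := HasDerivAt.tendsto_slope_zero_right h2
    simpa using h3
  have hL := ((hder z (hz.trans hr1)).sub (hder 0 (by simp))).norm
  have hR : Tendsto (fun t : ℝ => (M / (1 - (r + t * (‖v‖ + 1)) ^ 2)
      + M / (1 - (t * (‖v‖ + 1)) ^ 2)) * ‖v‖ / r * ‖z‖) (𝓝[>] 0)
      (𝓝 ((M / (1 - (r + 0 * (‖v‖ + 1)) ^ 2)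
      + M / (1 - (0 * (‖v‖ + 1)) ^ 2)) * ‖v‖ / r * ‖z‖)) := by
    refine ContinuousAt.continuousWithinAt
      (f := fun t : ℝ => (M / (1 - (r + t * (‖v‖ + 1)) ^ 2)
      + M / (1 - (t * (‖v‖ + 1)) ^ 2)) * ‖v‖ / r * ‖z‖) ?_
    have h1 : (1 - (r + 0 * (‖v‖ + 1)) ^ 2) ≠ 0 := by simpa using hA.ne'
    have h2 : (1 - (0 * (‖v‖ + 1)) ^ 2) ≠ 0 := by simp
    fun_prop (disch := first | exact h1 | exact h2 | exact hr.ne')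
  have hev : ∀ᶠ t : ℝ in 𝓝[>] 0, r + t * (‖v‖ + 1) < 1 := by
    refine nhdsWithin_le_nhds (ContinuousAt.eventually_lt (f := fun t : ℝ => r + t * (‖v‖ + 1))
      (g := fun _ => (1 : ℝ)) (by fun_prop) (by fun_prop) (by simpa using hr1))
  have := le_of_tendsto_of_tendsto hL hR (by
    filter_upwards [hev, self_mem_nhdsWithin] with t ht1 ht0 using key t ht0 ht1)
  rw [sub_apply]
  refine this.trans_eq ?_
  simp
  ring

end Aux

/-- if `f : Bⁿ → ℂⁿ` is holomorphic with `|f| ≤ M`, then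
`|f'(z) - f'(0)| ≤ M(2-|z|²)/(1-|z|²)` on `Bⁿ`, and `|f'(z)-f'(0)| ≤ mM|z|` for
`|z| ≤ r₁ = √((5-√17)/2)`, where `m = √2(7+√17)/(4√(5-√17))`. -/
theorem stmt_17 (n : ℕ) (M : ℝ) (hM : 0 < M)
    (f : EuclideanSpace ℂ (Fin n) → EuclideanSpace ℂ (Fin n))
    (hf : DifferentiableOn ℂ f (ball 0 1))
    (hbd : ∀ z ∈ ball (0 : EuclideanSpace ℂ (Fin n)) 1, ‖f z‖ ≤ M)
    (r₁ : ℝ) (hr₁ : r₁ = Real.sqrt ((5 - Real.sqrt 17) / 2))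
    (m : ℝ) (hm : m = Real.sqrt 2 * (7 + Real.sqrt 17) / (4 * Real.sqrt (5 - Real.sqrt 17))) :
    (∀ z ∈ ball (0 : EuclideanSpace ℂ (Fin n)) 1,
      ‖fderiv ℂ f z - fderiv ℂ f 0‖ ≤ M * (2 - ‖z‖ ^ 2) / (1 - ‖z‖ ^ 2)) ∧
    (∀ z : EuclideanSpace ℂ (Fin n), ‖z‖ ≤ r₁ →
      ‖fderiv ℂ f z - fderiv ℂ f 0‖ ≤ m * M * ‖z‖) := by
  have part1 : ∀ z : EuclideanSpace ℂ (Fin n), ‖z‖ < 1 →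
      ‖fderiv ℂ f z - fderiv ℂ f 0‖ ≤ M / (1 - ‖z‖ ^ 2) + M := by
    intro z hz
    have h1 := norm_fderiv_le_schwarzPick hM.le hf hbd hz
    have h2 := norm_fderiv_le_schwarzPick hM.le hf hbd (z := 0) (by simp)
    simp only [norm_zero, ne_eq, OfNat.ofNat_ne_zero, not_false_eq_true, zero_pow, sub_zero,
      div_one] at h2
    exact (norm_sub_le _ _).trans (add_le_add h1 h2)
  refine ⟨fun z hz => ?_, fun z hz => ?_⟩
  · rw [mem_ball_zero_iff] at hz
    have hA : 0 < 1 - ‖z‖ ^ 2 := by nlinarith [norm_nonneg z]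
    refine (part1 z hz).trans_eq ?_
    field_simp
    ring
  · set q := Real.sqrt 17 with hq
    have hq2 : q ^ 2 = 17 := Real.sq_sqrt (by norm_num)
    have hq0 : 0 ≤ q := Real.sqrt_nonneg _
    have hq4 : 4 < q := by nlinarith
    have hq5 : q < 5 := by nlinarith
    have hrpos : 0 < r₁ := by rw [hr₁]; exact Real.sqrt_pos.2 (by linarith)
    have hrsq : r₁ ^ 2 = (5 - q) / 2 := by rw [hr₁]; exact Real.sq_sqrt (by linarith)
    have hr1 : r₁ < 1 := by nlinarith
    have hmr : m * M = (M / (1 - r₁ ^ 2) + M) / r₁ := by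
      have hs2 : Real.sqrt 2 ≠ 0 := by positivity
      have hs5 : Real.sqrt (5 - q) ≠ 0 := (Real.sqrt_pos.2 (by linarith)).ne'
      have hq3 : q - 3 ≠ 0 := by linarith
      have h1 : 1 - r₁ ^ 2 = (q - 3) / 2 := by rw [hrsq]; ring
      have h2 : r₁ = Real.sqrt (5 - q) / Real.sqrt 2 := by
        rw [hr₁, Real.sqrt_div (by linarith)]
      rw [h1, h2, hm]
      field_simp
      linear_combination hq2
    rw [hmr]
    rcases hz.lt_or_eq with hlt | heq
    · exact norm_fderiv_sub_le_schwarz hM.le hrpos hr1 hf hbd hlt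
    · refine (part1 z (by rw [heq]; exact hr1)).trans_eq ?_
      rw [heq, div_mul_cancel₀ _ hrpos.ne']
end
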